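/- Let τ2 ≥ τ1 ≥ 0. If the switched system ẋ(t) = f_{σ(t)}(x(t)) is globally uniformly asymptotically stable on S_dw(τ1,τ2), then there exist functions α1, α2 of class K∞ and continuous functions V_i^−, V_i^+ : ℝ^n → ℝ for i ∈ I such that: (i) α1(|x|) ≤ V_i^*(x) ≤ α2(|x|) for all i ∈ I, * ∈ {−,+} and all x ∈ ℝ^n; (ii) V_i^+(Φ_i(t,x)) ≤ e^{−t} V_i^−(x) for all i ∈ I, all t ∈ [0, τ2 − τ1] and all x ∈ ℝ^n; (iii) V_j^−(Φ_i(τ1,x)) ≤ e^{−τ1} V_i^+(x) for all i ≠ j in I and all x ∈ ℝ^n. -/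

import Mathlib

open Filter Set
open scoped Classical

noncomputable section

/-- A switching signal `σ : [0,∞) → {1,…,M}` (piecewise constant, right continuous),
encoded by the (possibly finite) strictly increasing sequence of its switching instants
`T 1 < T 2 < …` (the discontinuity points, with the convention `T 0 = 0`, and `num` the
extended-natural number of switching instants) together with the value `idx k ∈ Fin M`
taken on the `k`-th inter-switching interval `[T k, T (k+1))`. Beyond the last switching
instant the time sequence is frozen, and if there are infinitely many switching instants
they tend to `+∞`. At each switching instant the value actually changes. -/
structure Signal (M : ℕ) where
  idx : ℕ → Fin M
  T : ℕ → ℝ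
  num : ℕ∞
  T0 : T 0 = 0
  mono : ∀ k : ℕ, T k ≤ T (k + 1)
  strict : ∀ k : ℕ, (k : ℕ∞) < num → T k < T (k + 1)
  frozen : ∀ k : ℕ, num ≤ (k : ℕ∞) → T (k + 1) = T k
  change : ∀ k : ℕ, (k : ℕ∞) < num → idx k ≠ idx (k + 1)
  unbounded : num = ⊤ → Tendsto T atTop atTop

/-- The index of the inter-switching interval containing time `t`. -/
def Signal.seg {M : ℕ} (s : Signal M) (t : ℝ) : ℕ :=
  sSup {k : ℕ | (k : ℕ∞) ≤ s.num ∧ s.T k ≤ t}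

/-- Given the flow maps `Φ i` of the subsystems, the state of the switched system at the
`k`-th switching instant, starting from `x` at time `0`. -/
def Signal.state {M : ℕ} {E : Type*} (Φ : Fin M → ℝ → E → E) (s : Signal M) (x : E) : ℕ → E
  | 0 => x
  | k + 1 =>
    if (k : ℕ∞) < s.num then
      Φ (s.idx k) (s.T (k + 1) - s.T k) (Signal.state Φ s x k)
    else Signal.state Φ s x k

/-- The solution `Φ_σ(t,x)` of the switched system associated to the flow maps `Φ i` of the
subsystems, for the switching signal `s`, starting at `x` (at time `0`), evaluated at time `t`. -/
def Signal.sol {M : ℕ} {E : Type*} (Φ : Fin M → ℝ → E → E) (s : Signal M) (t : ℝ) (x : E) : E :=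
  Φ (s.idx (s.seg t)) (t - s.T (s.seg t)) (Signal.state Φ s x (s.seg t))

/-- The class `S_dw(τ1,τ2)`: switching signals with `τ1 ≤ t_k − t_{k−1} ≤ τ2` for every
switching instant `t_k > 0`. -/
def Sdw (M : ℕ) (τ1 τ2 : ℝ) : Set (Signal M) :=
  {s | ∀ k : ℕ, (k : ℕ∞) < s.num →
    τ1 ≤ s.T (k + 1) - s.T k ∧ s.T (k + 1) - s.T k ≤ τ2}

/-- The class `S*_dw(τ1,τ2)`: switching signals with `τ1 ≤ t_{k+1} − t_k ≤ τ2` for every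
switching instant `t_k > 0`, and with `t_1 ≤ τ2`. -/
def SdwStar (M : ℕ) (τ1 τ2 : ℝ) : Set (Signal M) :=
  {s | (∀ k : ℕ, 1 ≤ k → (k : ℕ∞) < s.num →
      τ1 ≤ s.T (k + 1) - s.T k ∧ s.T (k + 1) - s.T k ≤ τ2) ∧
    (1 ≤ s.num → s.T 1 ≤ τ2)}

/-- A function `α : [0,∞) → [0,∞)` of class `K∞`: continuous, vanishing at `0`,
strictly increasing and unbounded. -/
def ClassKInf (α : ℝ → ℝ) : Prop :=
  ContinuousOn α (Ici 0) ∧ α 0 = 0 ∧ StrictMonoOn α (Ici 0) ∧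
    Tendsto α atTop atTop ∧ ∀ r ∈ Ici (0 : ℝ), 0 ≤ α r

/-- A function `β : [0,∞) × [0,∞) → [0,∞)` of class `KL`. -/
def ClassKL (β : ℝ → ℝ → ℝ) : Prop :=
  ContinuousOn (Function.uncurry β) (Ici 0 ×ˢ Ici 0) ∧
  (∀ s ∈ Ici (0 : ℝ), β 0 s = 0 ∧ StrictMonoOn (fun r => β r s) (Ici 0)) ∧
  (∀ r ∈ Ici (0 : ℝ), AntitoneOn (β r) (Ici 0) ∧ Tendsto (β r) atTop (nhds 0)) ∧
  (∀ r ∈ Ici (0 : ℝ), ∀ s ∈ Ici (0 : ℝ), 0 ≤ β r s)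

/-- Global uniform asymptotic stability (GUAS) of the switched system with subsystem flows
`Φ i` over the class `S` of switching signals. -/
def GUAS {M : ℕ} {E : Type*} [NormedAddCommGroup E] (Φ : Fin M → ℝ → E → E)
    (S : Set (Signal M)) : Prop :=
  ∃ β : ℝ → ℝ → ℝ, ClassKL β ∧
    ∀ s ∈ S, ∀ x : E, ∀ t ≥ (0 : ℝ), ‖Signal.sol Φ s t x‖ ≤ β ‖x‖ t

/-- Uniform exponential stability with decay `ρ` (`ρ`-UES) of the switched system with
subsystem flows `Φ i` over the class `S` of switching signals. -/
def UES {M : ℕ} {E : Type*} [NormedAddCommGroup E] (ρ : ℝ) (Φ : Fin M → ℝ → E → E)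
    (S : Set (Signal M)) : Prop :=
  ∃ C : ℝ, 0 ≤ C ∧ ∀ s ∈ S, ∀ x : E, ∀ t ≥ (0 : ℝ),
    ‖Signal.sol Φ s t x‖ ≤ C * Real.exp (-ρ * t) * ‖x‖

/-!
Sontag's lemma on `KL`-functions turns the GUAS estimate into exponential decay
`a(|Φ_σ(t,x)|) ≤ γ(|x|) e^{-2t}` with `a` and `γ` of class `K∞`. Let `W_i(x)` be the supremum of
`e^t a(|Φ_σ(t,x)|)` over `t ≥ 0` and over the admissible `σ` that start in mode `i`. It lies between
`a(|x|)` and `γ(|x|)`, and it is continuous because the surplus decay makes only bounded times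
matter, uniformly in `σ`. Prefixing a signal that starts in mode `j ≠ i` by a stay of length
`d ∈ [τ1,τ2]` in mode `i` is admissible, whence `W_j(Φ_i(d,x)) ≤ e^{-d} W_i(x)`. Take
`V_i^- = W_i`, and for `V_i^+` the smallest function allowed by (iii) and the lower bound in (i);
then (ii) is the inequality for `W` with `d = τ1 + t`.
-/

open scoped Topology

lemma continuous_ciSup_of_equicontinuous {ι X : Type*} [Nonempty ι] [TopologicalSpace X]
    {F : ι → X → ℝ} (hF : Equicontinuous F) (hbdd : ∀ x, BddAbove (range fun i => F i x)) :
    Continuous fun x => ⨆ i, F i x := by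
  refine continuous_iff_continuousAt.2 fun x => Metric.tendsto_nhds.2 fun ε hε => ?_
  filter_upwards [Metric.equicontinuousAt_iff_right.1 (hF x) (ε / 2) (half_pos hε)] with y hy
  have hle {u v : X} (huv : ∀ i, dist (F i u) (F i v) < ε / 2) :
      ⨆ i, F i u ≤ (⨆ i, F i v) + ε / 2 :=
    ciSup_le fun i => by
      linarith [le_ciSup (hbdd v) i, (abs_lt.1 (Real.dist_eq _ _ ▸ huv i)).2]
  rw [Real.dist_eq, abs_lt]
  constructor <;> linarith [hle hy, hle fun i => (dist_comm _ _).trans_lt (hy i)]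

lemma exists_forall_lipschitzOnWith {ι X Y : Type*} [Finite ι] [PseudoEMetricSpace X]
    [PseudoEMetricSpace Y] {f : ι → X → Y} {s : Set X}
    (hf : ∀ i, ∃ K, LipschitzOnWith K (f i) s) : ∃ K, ∀ i, LipschitzOnWith K (f i) s := by
  choose K hK using hf
  obtain ⟨C, hC⟩ := (finite_range K).bddAbove
  exact ⟨C, fun i => (hK i).weaken (hC (mem_range_self i))⟩

section ComparisonFunctions

lemma exists_continuous_monotone_ge {p : ℝ → ℝ} (hp : Monotone p) :
    ∃ h : ℝ → ℝ, Continuous h ∧ Monotone h ∧ p ≤ h := by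
  have hshift (r : ℝ) : IntervalIntegrable (fun x => p (x + r)) MeasureTheory.volume 0 1 :=
    (hp.comp (add_left_mono (a := r))).intervalIntegrable
  refine ⟨fun r => ∫ x in (0 : ℝ)..1, p (x + r), ?_, fun a b hab => ?_, fun r => ?_⟩
  · have hprim := intervalIntegral.continuous_primitive
      (fun a b => hp.intervalIntegrable (a := a) (b := b) (μ := MeasureTheory.volume)) 0
    have hsplit (r : ℝ) : ∫ x in (0 : ℝ)..1, p (x + r) =
        (∫ x in (0 : ℝ)..(1 + r), p x) - ∫ x in (0 : ℝ)..r, p x := by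
      rw [intervalIntegral.integral_comp_add_right, zero_add,
        intervalIntegral.integral_interval_sub_left hp.intervalIntegrable hp.intervalIntegrable]
    simp only [hsplit]
    exact (hprim.comp (continuous_const.add continuous_id)).sub hprim
  · exact intervalIntegral.integral_mono_on zero_le_one (hshift a) (hshift b)
      fun x _ => hp (add_le_add_right hab x)
  · simpa using intervalIntegral.integral_mono_on zero_le_one
      (intervalIntegrable_const (c := p r)) (hshift r) fun x hx => hp (by linarith [hx.1])

lemma exists_continuous_monotone_upperBound {A : ℝ → Set ℝ} (hA : Monotone A)
    (hbdd : ∀ r, BddAbove (A r)) :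
    ∃ h : ℝ → ℝ, Continuous h ∧ Monotone h ∧ (∀ r, 0 ≤ h r) ∧ ∀ r, ∀ t ∈ A r, t ≤ h r := by
  have hbdd' (r : ℝ) : BddAbove (insert 0 (A r)) := (hbdd r).insert 0
  have hsup : Monotone fun r => sSup (insert 0 (A r)) := fun _ b hab =>
    csSup_le_csSup (hbdd' b) (insert_nonempty _ _) (insert_subset_insert (hA hab))
  obtain ⟨h, hcont, hmono, hle⟩ := exists_continuous_monotone_ge hsup
  exact ⟨h, hcont, hmono, fun r => (le_csSup (hbdd' r) (mem_insert 0 _)).trans (hle r),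
    fun r t ht => (le_csSup (hbdd' r) (mem_insert_of_mem 0 ht)).trans (hle r)⟩

lemma ClassKInf.monotoneOn {α : ℝ → ℝ} (hα : ClassKInf α) : MonotoneOn α (Ici 0) :=
  hα.2.2.1.monotoneOn

lemma ClassKInf.nonneg {α : ℝ → ℝ} (hα : ClassKInf α) {r : ℝ} (hr : 0 ≤ r) : 0 ≤ α r :=
  hα.2.2.2.2 r hr

lemma classKInf_id : ClassKInf fun r => r :=
  ⟨continuousOn_id, rfl, strictMonoOn_id, tendsto_id, fun _ hr => hr⟩

lemma ClassKInf.mul {α m : ℝ → ℝ} (hα : ClassKInf α) (hcont : ContinuousOn m (Ioi 0))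
    (hmono : MonotoneOn m (Ioi 0)) (hpos : ∀ r > 0, 0 < m r) :
    ClassKInf fun r => α r * m r := by
  have hzero : α 0 * m 0 = 0 := by rw [hα.2.1, zero_mul]
  have hnonneg : ∀ r ∈ Ici (0 : ℝ), 0 ≤ α r * m r := by
    rintro r (hr : 0 ≤ r)
    rcases hr.eq_or_lt with rfl | hr'
    · exact hzero.ge
    · exact mul_nonneg (hα.nonneg hr) (hpos r hr').le
  refine ⟨?_, hzero, ?_, ?_, hnonneg⟩
  · rintro r (hr : 0 ≤ r)
    rcases hr.eq_or_lt with rfl | hr'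
    · have hlim : Tendsto (fun r => α r * m 1) (𝓝[≥] 0) (𝓝 0) := by
        simpa [hα.2.1] using (hα.1 0 self_mem_Ici).tendsto.mul_const (m 1)
      rw [ContinuousWithinAt, hzero]
      refine tendsto_of_tendsto_of_tendsto_of_le_of_le' tendsto_const_nhds hlim
        (eventually_nhdsWithin_of_forall hnonneg) ?_
      filter_upwards [self_mem_nhdsWithin, mem_nhdsWithin_of_mem_nhds (Iio_mem_nhds one_pos)]
        with r (hr0 : 0 ≤ r) (hr1 : r < 1)
      rcases hr0.eq_or_lt with rfl | hr0'
      · simp [hα.2.1]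
      · exact mul_le_mul_of_nonneg_left (hmono hr0' (mem_Ioi.2 one_pos) hr1.le) (hα.nonneg hr0)
    · exact (hα.1 r hr).mul
        ((hcont.continuousAt (Ioi_mem_nhds hr')).continuousWithinAt)
  · rintro r (hr : 0 ≤ r) s (hs : 0 ≤ s) hrs
    rcases hr.eq_or_lt with rfl | hr'
    · have hαs : 0 < α s := hα.2.1 ▸ hα.2.2.1 self_mem_Ici hs hrs
      simpa only [hzero] using mul_pos hαs (hpos s hrs)
    · exact mul_lt_mul (hα.2.2.1 hr hs hrs) (hmono hr' (hr'.trans hrs) hrs.le) (hpos r hr')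
        (hα.nonneg hs)
  · refine tendsto_atTop_mono' _ ?_ (hα.2.2.2.1.atTop_mul_const (hpos 1 one_pos))
    filter_upwards [eventually_ge_atTop 1] with r hr
    have hr0 : 0 < r := one_pos.trans_le hr
    exact mul_le_mul_of_nonneg_left (hmono (mem_Ioi.2 one_pos) hr0 hr) (hα.nonneg hr0.le)

variable {β : ℝ → ℝ → ℝ}

lemma ClassKL.nonneg (hβ : ClassKL β) {r t : ℝ} (hr : 0 ≤ r) (ht : 0 ≤ t) : 0 ≤ β r t :=
  hβ.2.2.2 r hr t ht

lemma ClassKL.monotoneOn_left (hβ : ClassKL β) {t : ℝ} (ht : 0 ≤ t) :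
    MonotoneOn (fun r => β r t) (Ici 0) :=
  (hβ.2.1 t ht).2.monotoneOn

lemma ClassKL.exists_classKInf_le (hβ : ClassKL β) :
    ∃ ρ, ClassKInf ρ ∧ ∀ r ≥ 0, ∀ t ≥ 0, ρ (β r t) ≤ r := by
  -- `ρ` inverts `r ↦ r + β r 0`, which the cut-off `max r 0` extends to a bijection of `ℝ`.
  let B : ℝ → ℝ := fun r => r + β (max r 0) 0
  have hle_B (r : ℝ) : r ≤ B r :=
    le_add_of_nonneg_right (hβ.nonneg (le_max_right r 0) le_rfl)
  have hB_strictMono : StrictMono B := strictMono_id.add_monotone fun r s hrs =>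
    hβ.monotoneOn_left le_rfl (le_max_right r 0) (le_max_right s 0) (max_le_max_right 0 hrs)
  have hB_cont : Continuous B :=
    continuous_id.add <| hβ.1.comp_continuous (f := fun r : ℝ => (max r 0, (0 : ℝ)))
      (by fun_prop) fun r => ⟨le_max_right r 0, self_mem_Ici⟩
  have hB_zero : B 0 = 0 := by simp [B, (hβ.2.1 0 self_mem_Ici).1]
  have hB_bot : Tendsto B atBot atBot := by
    refine tendsto_id.congr' ?_
    filter_upwards [eventually_le_atBot 0] with r hr
    simp [B, max_eq_right hr, (hβ.2.1 0 self_mem_Ici).1]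
  let e : ℝ ≃o ℝ := hB_strictMono.orderIsoOfSurjective B
    (hB_cont.surjective (tendsto_atTop_mono hle_B tendsto_id) hB_bot)
  have he_zero : e.symm 0 = 0 := e.symm_apply_eq.2 hB_zero.symm
  refine ⟨e.symm, ⟨e.symm.continuous.continuousOn, he_zero, e.symm.strictMono.strictMonoOn _,
    e.symm.tendsto_atTop, fun r hr => he_zero ▸ e.symm.monotone hr⟩, fun r hr t ht => ?_⟩
  refine e.symm_apply_le.2 ?_
  calc β r t ≤ β r 0 := (hβ.2.2.1 r hr).1 self_mem_Ici ht ht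
    _ ≤ r + β (max r 0) 0 := by rw [max_eq_left hr]; exact le_add_of_nonneg_left hr

lemma ClassKL.exists_settlingTime (hβ : ClassKL β) :
    ∃ h : ℝ → ℝ, Continuous h ∧ Monotone h ∧ (∀ r, 0 ≤ h r) ∧
      ∀ r > 0, ∀ t ≥ 0, r⁻¹ ≤ β r t → t ≤ h r := by
  let A : ℝ → Set ℝ := fun r => {t | 0 ≤ t ∧ ∃ q ∈ Ioc 0 r, q⁻¹ ≤ β q t}
  have hA_mono : Monotone A := fun _ _ hrs _ ⟨ht, q, hq, hqt⟩ =>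
    ⟨ht, q, ⟨hq.1, hq.2.trans hrs⟩, hqt⟩
  have hA_bdd (r : ℝ) : BddAbove (A r) := by
    rcases le_or_gt r 0 with hr | hr
    · exact ⟨0, fun t ⟨_, q, hq, _⟩ => absurd (hq.1.trans_le hq.2) hr.not_gt⟩
    · obtain ⟨T, hT⟩ := eventually_atTop.1
        ((hβ.2.2.1 r hr.le).2.eventually (gt_mem_nhds (inv_pos.2 hr)))
      refine ⟨T, fun t ⟨ht, q, hq, hqt⟩ => le_of_not_gt fun hTt => lt_irrefl r⁻¹ ?_⟩
      calc r⁻¹ ≤ q⁻¹ := inv_anti₀ hq.1 hq.2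
        _ ≤ β q t := hqt
        _ ≤ β r t := hβ.monotoneOn_left ht hq.1.le hr.le hq.2
        _ < r⁻¹ := hT t hTt.le
  obtain ⟨h, hcont, hmono, hnonneg, hA⟩ := exists_continuous_monotone_upperBound hA_mono hA_bdd
  exact ⟨h, hcont, hmono, hnonneg, fun r hr t ht hrt => hA r t ⟨ht, r, ⟨hr, le_rfl⟩, hrt⟩⟩

/- Since `β r t < 1 / r` for `t > h r`, a value `y = β r t > 0` is attained at a time
`t ≤ h (max r y⁻¹) ≤ h r + h y⁻¹`. The factors `e^{-c h(1/y)}` in `a` and `e^{c h(r)}` in `γ`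
pay for these two summands; the junk value `0⁻¹ = 0` is harmless because `ρ 0 = 0`. -/
lemma ClassKL.exists_classKInf_comp_le_mul_exp (hβ : ClassKL β) {c : ℝ} (hc : 0 ≤ c) :
    ∃ a γ, ClassKInf a ∧ ClassKInf γ ∧
      ∀ r ≥ 0, ∀ t ≥ 0, a (β r t) ≤ γ r * Real.exp (-c * t) := by
  obtain ⟨ρ, hρ, hρβ⟩ := hβ.exists_classKInf_le
  obtain ⟨h, hcont, hmono, hnonneg, hsettle⟩ := hβ.exists_settlingTime
  have ha : ClassKInf fun y => ρ y * Real.exp (-c * h y⁻¹) := by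
    refine hρ.mul ?_ (fun y hy z _ hyz => Real.exp_le_exp.2 ?_) fun y _ => Real.exp_pos _
    · have hinv : ContinuousOn (fun y : ℝ => y⁻¹) (Ioi 0) :=
        continuousOn_inv₀.mono fun y hy => ne_of_gt hy
      exact (continuousOn_const.mul (hcont.comp_continuousOn hinv)).rexp
    · exact mul_le_mul_of_nonpos_left (hmono (inv_anti₀ hy hyz)) (neg_nonpos.2 hc)
  have hγ : ClassKInf fun r => r * Real.exp (c * h r) :=
    classKInf_id.mul (by fun_prop)
      (fun _ _ _ _ hrs => Real.exp_le_exp.2 (mul_le_mul_of_nonneg_left (hmono hrs) hc))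
      fun r _ => Real.exp_pos _
  refine ⟨_, _, ha, hγ, fun r hr t ht => ?_⟩
  rcases (hβ.nonneg hr ht).eq_or_lt with hy | hy
  · simpa only [← hy, hρ.2.1, zero_mul] using mul_nonneg (hγ.nonneg hr) (Real.exp_pos _).le
  have ht_le : t ≤ h r + h (β r t)⁻¹ := by
    have hR : 0 < max r (β r t)⁻¹ := lt_max_of_lt_right (inv_pos.2 hy)
    have hyR : (max r (β r t)⁻¹)⁻¹ ≤ β (max r (β r t)⁻¹) t :=
      (inv_le_of_inv_le₀ hy (le_max_right _ _)).trans
        (hβ.monotoneOn_left ht hr hR.le (le_max_left _ _))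
    refine (hsettle _ hR t ht hyR).trans ?_
    rw [hmono.map_max]
    exact max_le_add_of_nonneg (hnonneg _) (hnonneg _)
  calc ρ (β r t) * Real.exp (-c * h (β r t)⁻¹) ≤ r * Real.exp (c * h r + -c * t) :=
        mul_le_mul (hρβ r hr t ht)
          (Real.exp_le_exp.2 (by linarith [mul_le_mul_of_nonneg_left ht_le hc]))
          (Real.exp_pos _).le hr
    _ = r * Real.exp (c * h r) * Real.exp (-c * t) := by rw [Real.exp_add, mul_assoc]

end ComparisonFunctions

section ForwardFlows

variable {E : Type*} [NormedAddCommGroup E] [NormedSpace ℝ E]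

/-- `φ t x` is the solution at time `t` of `ẋ = f(x)`, `x(0) = x`, on the half-line `t ≥ 0`; at
`t = 0` the derivative is the right one. The values of `φ` at negative times are irrelevant. -/
structure IsForwardFlow (f : E → E) (φ : ℝ → E → E) : Prop where
  map_zero : ∀ x, φ 0 x = x
  isIntegralCurveOn : ∀ x, IsIntegralCurveOn (fun t => φ t x) (fun _ => f) (Ici 0)

variable {f : E → E} {φ : ℝ → E → E} {s : Set E} {K : NNReal} {t : ℝ}

lemma IsForwardFlow.dist_le (hφ : IsForwardFlow f φ) (hf : LipschitzOnWith K f s) (ht : 0 ≤ t)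
    {x y : E} (hx : ∀ r ∈ Ico 0 t, φ r x ∈ s) (hy : ∀ r ∈ Ico 0 t, φ r y ∈ s) :
    dist (φ t x) (φ t y) ≤ dist x y * Real.exp (K * t) := by
  have hcont (z : E) : ContinuousOn (fun r => φ r z) (Icc 0 t) :=
    (hφ.isIntegralCurveOn z).continuousOn.mono Icc_subset_Ici_self
  have hderiv (z : E) : ∀ r ∈ Ico 0 t, HasDerivWithinAt (fun r => φ r z) (f (φ r z)) (Ici r) r :=
    fun r hr => (hφ.isIntegralCurveOn z r hr.1).mono (Ici_subset_Ici.2 hr.1)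
  simpa using dist_le_of_trajectories_ODE_of_mem (v := fun _ => f) (fun _ _ => hf)
    (hcont x) (hderiv x) hx (hcont y) (hderiv y) hy (δ := dist x y)
    (by simp only [hφ.map_zero, le_refl]) t ⟨ht, le_rfl⟩

lemma IsForwardFlow.map_add (hφ : IsForwardFlow f φ) (hf : LipschitzOnWith K f s) {x : E}
    (hx : ∀ r ≥ 0, φ r x ∈ s) (ht : 0 ≤ t) (hxt : ∀ r ≥ 0, φ r (φ t x) ∈ s) {r : ℝ}
    (hr : 0 ≤ r) : φ r (φ t x) = φ (r + t) x := by
  have hshift : IsIntegralCurveOn (fun r => φ (r + t) x) (fun _ => f) (Ici 0) :=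
    ((hφ.isIntegralCurveOn x).comp_add t).mono fun r (hr : 0 ≤ r) =>
      mem_vadd_set_iff_neg_vadd_mem.2 (by simpa [add_comm] using add_nonneg hr ht)
  have hright {u : ℝ → E} (hu : IsIntegralCurveOn u (fun _ => f) (Ici 0)) :
      ∀ q ∈ Ico 0 r, HasDerivWithinAt u (f (u q)) (Ici q) q :=
    fun q hq => (hu q hq.1).mono (Ici_subset_Ici.2 hq.1)
  exact ODE_solution_unique_of_mem_Icc_right (v := fun _ => f) (s := fun _ => s) (fun _ _ => hf)
    ((hφ.isIntegralCurveOn _).continuousOn.mono Icc_subset_Ici_self)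
    (hright (hφ.isIntegralCurveOn _)) (fun q hq => hxt q hq.1)
    (hshift.continuousOn.mono Icc_subset_Ici_self) (hright hshift)
    (fun q hq => hx _ (add_nonneg hq.1 ht)) (by simp only [hφ.map_zero, zero_add]) ⟨hr, le_rfl⟩

lemma IsForwardFlow.continuous_of_bounded (hφ : IsForwardFlow f φ)
    (hf : ∀ R, ∃ K, LipschitzOnWith K f (Metric.closedBall 0 R))
    (hbdd : ∀ R, ∃ B, ∀ x ∈ Metric.closedBall 0 R, ∀ t ≥ 0, φ t x ∈ Metric.closedBall 0 B)
    (ht : 0 ≤ t) : Continuous (φ t) := by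
  refine continuous_iff_continuousAt.2 fun x => ?_
  obtain ⟨B, hB⟩ := hbdd (‖x‖ + 1)
  obtain ⟨K, hK⟩ := hf B
  have hlip : LipschitzOnWith (Real.exp (K * t)).toNNReal (φ t)
      (Metric.closedBall 0 (‖x‖ + 1)) := by
    refine LipschitzOnWith.of_dist_le_mul fun y hy z hz => ?_
    rw [Real.coe_toNNReal _ (Real.exp_pos _).le, mul_comm]
    exact hφ.dist_le hK ht (fun r hr => hB y hy r hr.1) fun r hr => hB z hz r hr.1
  exact hlip.continuousOn.continuousAt (Metric.closedBall_mem_nhds_of_mem (by simp))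

lemma IsForwardFlow.map_add_of_bounded (hφ : IsForwardFlow f φ)
    (hf : ∀ R, ∃ K, LipschitzOnWith K f (Metric.closedBall 0 R))
    (hbdd : ∀ R, ∃ B, ∀ x ∈ Metric.closedBall 0 R, ∀ t ≥ 0, φ t x ∈ Metric.closedBall 0 B)
    {r : ℝ} (hr : 0 ≤ r) (ht : 0 ≤ t) (x : E) : φ r (φ t x) = φ (r + t) x := by
  obtain ⟨B, hB⟩ := hbdd ‖x‖
  have hx : ∀ q ≥ 0, φ q x ∈ Metric.closedBall 0 B := hB x (by simp)
  obtain ⟨B', hB'⟩ := hbdd B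
  obtain ⟨K, hK⟩ := hf (max B B')
  exact hφ.map_add hK (fun q hq => Metric.closedBall_subset_closedBall (le_max_left _ _) (hx q hq))
    ht (fun q hq => Metric.closedBall_subset_closedBall (le_max_right _ _)
      (hB' _ (hx t ht) q hq)) hr

end ForwardFlows

namespace Signal

variable {M : ℕ}

lemma T_mono (σ : Signal M) : Monotone σ.T := monotone_nat_of_le_succ σ.mono

lemma T_nonneg (σ : Signal M) (k : ℕ) : 0 ≤ σ.T k := σ.T0 ▸ σ.T_mono k.zero_le

lemma seg_eq {σ : Signal M} {k : ℕ} {t : ℝ} (hk : k ≤ σ.num) (hTk : σ.T k ≤ t)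
    (hlt : k < σ.num → t < σ.T (k + 1)) : σ.seg t = k := by
  refine IsGreatest.csSup_eq ⟨⟨hk, hTk⟩, fun l ⟨hl, hTl⟩ => le_of_not_gt fun hkl => ?_⟩
  have hkσ : (k : ℕ∞) < σ.num := (Nat.cast_lt.2 hkl).trans_le hl
  exact (hlt hkσ).not_ge ((σ.T_mono hkl).trans hTl)

lemma seg_spec (σ : Signal M) {t : ℝ} (ht : 0 ≤ t) :
    σ.seg t ≤ σ.num ∧ σ.T (σ.seg t) ≤ t ∧ (σ.seg t < σ.num → t < σ.T (σ.seg t + 1)) := by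
  have hne : {k : ℕ | (k : ℕ∞) ≤ σ.num ∧ σ.T k ≤ t}.Nonempty :=
    ⟨0, by simp only [Nat.cast_zero, zero_le], σ.T0.trans_le ht⟩
  have hbdd : BddAbove {k : ℕ | (k : ℕ∞) ≤ σ.num ∧ σ.T k ≤ t} := by
    rcases eq_or_ne σ.num ⊤ with htop | htop
    · obtain ⟨N, hN⟩ := ((σ.unbounded htop).eventually_gt_atTop t).exists
      exact ⟨N, fun k hk => le_of_not_gt fun hNk =>
        (hN.trans_le (σ.T_mono hNk.le)).not_ge hk.2⟩
    · lift σ.num to ℕ using htop with N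
      exact ⟨N, fun k hk => Nat.cast_le.1 hk.1⟩
  obtain ⟨hnum, hT⟩ := Nat.sSup_mem hne hbdd
  refine ⟨hnum, hT, fun hlt => lt_of_not_ge fun hge => ?_⟩
  exact (le_csSup hbdd ⟨mod_cast Order.add_one_le_of_lt hlt, hge⟩).not_gt (Nat.lt_succ_self _)

section Solutions

variable {E : Type*} {Φ : Fin M → ℝ → E → E}

lemma sol_eq {σ : Signal M} {k : ℕ} {t : ℝ} (hk : k ≤ σ.num) (hTk : σ.T k ≤ t)
    (hlt : k < σ.num → t < σ.T (k + 1)) (x : E) :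
    sol Φ σ t x = Φ (σ.idx k) (t - σ.T k) (state Φ σ x k) := by
  rw [sol, seg_eq hk hTk hlt]

/-- The signal that stays at `i` forever. -/
def const (i : Fin M) : Signal M where
  idx _ := i
  T _ := 0
  num := 0
  T0 := rfl
  mono _ := le_rfl
  strict _ hk := absurd hk not_lt_zero
  frozen _ _ := rfl
  change _ hk := absurd hk not_lt_zero
  unbounded h := absurd h ENat.zero_ne_top

lemma const_mem_Sdw (i : Fin M) (τ1 τ2 : ℝ) : const i ∈ Sdw M τ1 τ2 :=
  fun _ hk => absurd hk not_lt_zero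

lemma sol_const (i : Fin M) {t : ℝ} (ht : 0 ≤ t) (x : E) : sol Φ (const i) t x = Φ i t x := by
  rw [sol_eq (k := 0) (by simp only [Nat.cast_zero, zero_le]) ht fun h => absurd h (lt_irrefl _)]
  simp only [const, state, sub_zero]

/-- The signal that takes the value `i` on `[0, d)` and then follows `σ`. -/
def cons (i : Fin M) (d : ℝ) (hd : 0 < d) (σ : Signal M) (hi : i ≠ σ.idx 0) : Signal M where
  idx
    | 0 => i
    | k + 1 => σ.idx k
  T
    | 0 => 0
    | k + 1 => d + σ.T k
  num := σ.num + 1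
  T0 := rfl
  mono
    | 0 => by simpa only [σ.T0, add_zero] using hd.le
    | k + 1 => add_le_add_right (σ.mono k) d
  strict
    | 0, _ => by simpa only [σ.T0, add_zero] using hd
    | k + 1, hk => add_lt_add_right (σ.strict k (lt_of_add_lt_add_right (mod_cast hk))) d
  frozen
    | 0, hk => by simp at hk
    | k + 1, hk => congrArg (d + ·)
        (σ.frozen k ((ENat.add_le_add_iff_right ENat.one_ne_top).1 (mod_cast hk)))
  change
    | 0, _ => hi
    | k + 1, hk => σ.change k (lt_of_add_lt_add_right (mod_cast hk))
  unbounded h := by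
    have hσ : σ.num = ⊤ := by simpa using h
    exact (tendsto_add_atTop_iff_nat 1).1 (tendsto_atTop_add_const_left _ d (σ.unbounded hσ))

section Cons

variable {i : Fin M} {d : ℝ} {hd : 0 < d} {σ : Signal M} {hi : i ≠ σ.idx 0}

lemma succ_lt_num_cons {k : ℕ} : ((k + 1 : ℕ) : ℕ∞) < (cons i d hd σ hi).num ↔ k < σ.num := by
  rw [Nat.cast_succ]
  exact ENat.add_lt_add_iff_right ENat.one_ne_top

lemma cons_mem_Sdw {τ1 τ2 : ℝ} (hσ : σ ∈ Sdw M τ1 τ2) (hd' : d ∈ Icc τ1 τ2) :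
    cons i d hd σ hi ∈ Sdw M τ1 τ2
  | 0, _ => by simpa only [cons, σ.T0, add_zero, sub_zero, mem_Icc] using hd'
  | k + 1, hk => by simpa only [cons, add_sub_add_left_eq_sub] using hσ k (succ_lt_num_cons.1 hk)

lemma state_cons (x : E) (k : ℕ) :
    state Φ (cons i d hd σ hi) x (k + 1) = state Φ σ (Φ i d x) k := by
  induction k with
  | zero => simp [state, cons, σ.T0]
  | succ k ih =>
    rw [state, ih, state]
    simp only [succ_lt_num_cons]
    simp only [cons, add_sub_add_left_eq_sub]

lemma sol_cons {t : ℝ} (ht : 0 ≤ t) (x : E) :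
    sol Φ (cons i d hd σ hi) (t + d) x = sol Φ σ t (Φ i d x) := by
  obtain ⟨hnum, hT, hlt⟩ := σ.seg_spec ht
  have hnum' : ((σ.seg t + 1 : ℕ) : ℕ∞) ≤ (cons i d hd σ hi).num := by
    rw [Nat.cast_succ]
    exact add_le_add_left hnum 1
  have hT' : (cons i d hd σ hi).T (σ.seg t + 1) ≤ t + d := by
    simpa only [cons, add_comm t d] using add_le_add_right hT d
  rw [sol_eq hnum' hT' fun h => ?_, state_cons, sol]
  · simp only [cons, add_comm t d, add_sub_add_left_eq_sub]
  · simpa only [cons, add_comm t d] using add_lt_add_right (hlt (succ_lt_num_cons.1 h)) d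

end Cons

section DistLe

variable [NormedAddCommGroup E] [NormedSpace ℝ E] {f : Fin M → E → E} {s : Set E} {K : NNReal}
  {σ : Signal M} {x y : E}

lemma dist_flow_state_le (hΦ : ∀ i, IsForwardFlow (f i) (Φ i))
    (hf : ∀ i, LipschitzOnWith K (f i) s) (hx : ∀ t ≥ 0, sol Φ σ t x ∈ s)
    (hy : ∀ t ≥ 0, sol Φ σ t y ∈ s) {k : ℕ} (hk : k ≤ σ.num) {r : ℝ} (hr : 0 ≤ r)
    (hle : k < σ.num → σ.T k + r ≤ σ.T (k + 1)) :
    dist (Φ (σ.idx k) r (state Φ σ x k)) (Φ (σ.idx k) r (state Φ σ y k)) ≤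
      dist (state Φ σ x k) (state Φ σ y k) * Real.exp (K * r) := by
  have hmem {z : E} (hz : ∀ t ≥ 0, sol Φ σ t z ∈ s) (q : ℝ) (hq : q ∈ Ico 0 r) :
      Φ (σ.idx k) q (state Φ σ z k) ∈ s := by
    have hlt : k < σ.num → σ.T k + q < σ.T (k + 1) := fun h => by linarith [hq.2, hle h]
    simpa only [sol_eq hk (le_add_of_nonneg_right hq.1) hlt, add_sub_cancel_left] using
      hz (σ.T k + q) (add_nonneg (σ.T_nonneg k) hq.1)
  exact (hΦ _).dist_le (hf _) hr (hmem hx) (hmem hy)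

lemma dist_state_le (hΦ : ∀ i, IsForwardFlow (f i) (Φ i)) (hf : ∀ i, LipschitzOnWith K (f i) s)
    (hx : ∀ t ≥ 0, sol Φ σ t x ∈ s) (hy : ∀ t ≥ 0, sol Φ σ t y ∈ s) (k : ℕ) (hk : k ≤ σ.num) :
    dist (state Φ σ x k) (state Φ σ y k) ≤ dist x y * Real.exp (K * σ.T k) := by
  induction k with
  | zero => simp only [state, σ.T0, mul_zero, Real.exp_zero, mul_one, le_refl]
  | succ k ih =>
    have hk' : (k : ℕ∞) < σ.num := (Nat.cast_lt.2 k.lt_succ_self).trans_le hk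
    simp only [state, if_pos hk']
    calc _ ≤ _ := dist_flow_state_le hΦ hf hx hy hk'.le (sub_nonneg.2 (σ.mono k))
            fun _ => by linarith
      _ ≤ dist x y * Real.exp (K * σ.T k) * Real.exp (K * (σ.T (k + 1) - σ.T k)) := by
        gcongr
        exact ih hk'.le
      _ = dist x y * Real.exp (K * σ.T (k + 1)) := by
        rw [mul_assoc, ← Real.exp_add]
        ring_nf

lemma dist_sol_le (hΦ : ∀ i, IsForwardFlow (f i) (Φ i)) (hf : ∀ i, LipschitzOnWith K (f i) s)
    (hx : ∀ t ≥ 0, sol Φ σ t x ∈ s) (hy : ∀ t ≥ 0, sol Φ σ t y ∈ s) {t : ℝ} (ht : 0 ≤ t) :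
    dist (sol Φ σ t x) (sol Φ σ t y) ≤ dist x y * Real.exp (K * t) := by
  obtain ⟨hnum, hT, hlt⟩ := σ.seg_spec ht
  calc _ ≤ _ := dist_flow_state_le hΦ hf hx hy hnum (sub_nonneg.2 hT) fun h => by linarith [hlt h]
    _ ≤ dist x y * Real.exp (K * σ.T (σ.seg t)) * Real.exp (K * (t - σ.T (σ.seg t))) := by
      gcongr
      exact dist_state_le hΦ hf hx hy _ hnum
    _ = dist x y * Real.exp (K * t) := by
      rw [mul_assoc, ← Real.exp_add]
      ring_nf

end DistLe

end Solutions

end Signal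

section ValueFunction

variable {M : ℕ} {E : Type*} [NormedAddCommGroup E] {Φ : Fin M → ℝ → E → E}
  {S S' : Set (Signal M)} {a γ : ℝ → ℝ}

/-- GUAS in the form given by Sontag's lemma on `KL`-functions: measured through `a`, all
solutions decay exponentially. The rate `2` beats the weight `e^t` in `valueFunction`. -/
def ExpDecay (Φ : Fin M → ℝ → E → E) (S : Set (Signal M)) (a γ : ℝ → ℝ) : Prop :=
  ∀ σ ∈ S, ∀ x, ∀ t ≥ 0, a ‖Signal.sol Φ σ t x‖ ≤ γ ‖x‖ * Real.exp (-2 * t)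

lemma GUAS.exists_expDecay (h : GUAS Φ S) :
    ∃ a γ, ClassKInf a ∧ ClassKInf γ ∧ ExpDecay Φ S a γ := by
  obtain ⟨β, hβ, hsol⟩ := h
  obtain ⟨a, γ, ha, hγ, hle⟩ := hβ.exists_classKInf_comp_le_mul_exp zero_le_two
  refine ⟨a, γ, ha, hγ, fun σ hσ x t ht => ?_⟩
  exact (ha.monotoneOn (norm_nonneg _) (hβ.nonneg (norm_nonneg x) ht) (hsol σ hσ x t ht)).trans
    (hle ‖x‖ (norm_nonneg x) t ht)

namespace ExpDecay

lemma mono (h : ExpDecay Φ S a γ) (hS : S' ⊆ S) : ExpDecay Φ S' a γ :=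
  fun σ hσ => h σ (hS hσ)

lemma exp_mul_le_mul_exp_neg (h : ExpDecay Φ S a γ) {σ : Signal M} (hσ : σ ∈ S) {t : ℝ}
    (ht : 0 ≤ t) (x : E) : Real.exp t * a ‖Signal.sol Φ σ t x‖ ≤ γ ‖x‖ * Real.exp (-t) :=
  calc _ ≤ Real.exp t * (γ ‖x‖ * Real.exp (-2 * t)) :=
        mul_le_mul_of_nonneg_left (h σ hσ x t ht) (Real.exp_pos t).le
    _ = γ ‖x‖ * Real.exp (-t) := by
      rw [mul_left_comm, ← Real.exp_add]
      ring_nf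

lemma exp_mul_le (h : ExpDecay Φ S a γ) (hγ : ClassKInf γ) {σ : Signal M} (hσ : σ ∈ S) {t : ℝ}
    (ht : 0 ≤ t) (x : E) : Real.exp t * a ‖Signal.sol Φ σ t x‖ ≤ γ ‖x‖ :=
  (h.exp_mul_le_mul_exp_neg hσ ht x).trans
    (mul_le_of_le_one_right (hγ.nonneg (norm_nonneg x)) (Real.exp_le_one_iff.2 (neg_nonpos.2 ht)))

lemma exists_sol_mem_closedBall (h : ExpDecay Φ S a γ) (ha : ClassKInf a) (hγ : ClassKInf γ)
    (R : ℝ) : ∃ B, ∀ σ ∈ S, ∀ x ∈ Metric.closedBall 0 R, ∀ t ≥ 0,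
      Signal.sol Φ σ t x ∈ Metric.closedBall 0 B := by
  obtain ⟨B, hB⟩ := eventually_atTop.1 (ha.2.2.2.1.eventually_gt_atTop (γ R))
  refine ⟨B, fun σ hσ x hx t ht => mem_closedBall_zero_iff.2 (le_of_not_gt fun hBt => ?_)⟩
  have hxR : ‖x‖ ≤ R := mem_closedBall_zero_iff.1 hx
  refine lt_irrefl (γ R) ?_
  calc γ R < a ‖Signal.sol Φ σ t x‖ := hB _ hBt.le
    _ ≤ Real.exp t * a ‖Signal.sol Φ σ t x‖ :=
      le_mul_of_one_le_left (ha.nonneg (norm_nonneg _)) (Real.one_le_exp ht)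
    _ ≤ γ ‖x‖ := h.exp_mul_le hγ hσ ht x
    _ ≤ γ R := hγ.monotoneOn (norm_nonneg x) ((norm_nonneg x).trans hxR) hxR

end ExpDecay

/-- The converse Lyapunov function of the class `S` of switching signals: the largest value of
`e^t a(|Φ_σ(t,x)|)` over `σ ∈ S` and `t ≥ 0`. -/
def valueFunction (Φ : Fin M → ℝ → E → E) (S : Set (Signal M)) (a : ℝ → ℝ) (x : E) : ℝ :=
  ⨆ p : S × Ici (0 : ℝ), Real.exp p.2 * a ‖Signal.sol Φ p.1 p.2 x‖

namespace ExpDecay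

lemma bddAbove_range (h : ExpDecay Φ S a γ) (hγ : ClassKInf γ) (x : E) :
    BddAbove (range fun p : S × Ici (0 : ℝ) => Real.exp p.2 * a ‖Signal.sol Φ p.1 p.2 x‖) :=
  ⟨γ ‖x‖, forall_mem_range.2 fun p => h.exp_mul_le hγ p.1.2 p.2.2 x⟩

lemma valueFunction_le (h : ExpDecay Φ S a γ) (hγ : ClassKInf γ) (hS : S.Nonempty) (x : E) :
    valueFunction Φ S a x ≤ γ ‖x‖ :=
  have := hS.to_subtype
  ciSup_le fun p => h.exp_mul_le hγ p.1.2 p.2.2 x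

lemma exp_mul_le_valueFunction (h : ExpDecay Φ S a γ) (hγ : ClassKInf γ) {σ : Signal M}
    (hσ : σ ∈ S) {t : ℝ} (ht : 0 ≤ t) (x : E) :
    Real.exp t * a ‖Signal.sol Φ σ t x‖ ≤ valueFunction Φ S a x :=
  le_ciSup (h.bddAbove_range hγ x) (⟨σ, hσ⟩, ⟨t, ht⟩)

lemma norm_flow_le_exp_neg_mul_valueFunction (h : ExpDecay Φ S a γ) (hγ : ClassKInf γ)
    {i : Fin M} (hi : .const i ∈ S) {t : ℝ} (ht : 0 ≤ t) (x : E) :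
    a ‖Φ i t x‖ ≤ Real.exp (-t) * valueFunction Φ S a x := by
  rw [← Signal.sol_const (Φ := Φ) i ht x, Real.exp_neg]
  exact (le_inv_mul_iff₀ (Real.exp_pos t)).2 (h.exp_mul_le_valueFunction hγ hi ht x)

lemma valueFunction_le_exp_neg_mul (h : ExpDecay Φ S a γ) (hγ : ClassKInf γ) (hS' : S'.Nonempty)
    {d : ℝ} (hd : 0 ≤ d) {x y : E}
    (hshift : ∀ σ ∈ S', ∃ σ' ∈ S, ∀ t ≥ 0, Signal.sol Φ σ' (t + d) x = Signal.sol Φ σ t y) :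
    valueFunction Φ S' a y ≤ Real.exp (-d) * valueFunction Φ S a x := by
  have := hS'.to_subtype
  refine ciSup_le fun ⟨⟨σ, hσ⟩, ⟨t, (ht : 0 ≤ t)⟩⟩ => ?_
  obtain ⟨σ', hσ', hsol⟩ := hshift σ hσ
  rw [← hsol t ht, Real.exp_neg, le_inv_mul_iff₀ (Real.exp_pos d), ← mul_assoc, ← Real.exp_add,
    add_comm d]
  exact h.exp_mul_le_valueFunction hγ hσ' (add_nonneg ht hd) x

end ExpDecay

section Continuity

variable [NormedSpace ℝ E] {f : Fin M → E → E}

lemma ExpDecay.eventually_dist_lt (h : ExpDecay Φ S a γ) (ha : ClassKInf a) (hγ : ClassKInf γ)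
    (hΦ : ∀ i, IsForwardFlow (f i) (Φ i))
    (hf : ∀ i R, ∃ K, LipschitzOnWith K (f i) (Metric.closedBall 0 R)) (x₀ : E) (T : ℝ) {ε : ℝ}
    (hε : 0 < ε) : ∀ᶠ x in 𝓝 x₀, ∀ σ ∈ S, ∀ t ∈ Icc 0 T,
      dist (a ‖Signal.sol Φ σ t x₀‖) (a ‖Signal.sol Φ σ t x‖) < ε := by
  obtain ⟨B, hB⟩ := h.exists_sol_mem_closedBall ha hγ (‖x₀‖ + 1)
  obtain ⟨K, hK⟩ := exists_forall_lipschitzOnWith fun i => hf i B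
  obtain ⟨δ, hδ, ha_unif⟩ := Metric.uniformContinuousOn_iff.1
    (isCompact_Icc.uniformContinuousOn_of_continuous (ha.1.mono Icc_subset_Ici_self :
      ContinuousOn a (Icc 0 B))) ε hε
  have hclose : ∀ᶠ x in 𝓝 x₀, dist x₀ x * Real.exp (K * T) < δ :=
    (Continuous.tendsto (by fun_prop) x₀).eventually_lt_const (by simpa using hδ)
  have hball : ∀ᶠ x in 𝓝 x₀, x ∈ Metric.closedBall (0 : E) (‖x₀‖ + 1) :=
    Metric.closedBall_mem_nhds_of_mem (by simp)
  filter_upwards [hclose, hball] with x hx hxR σ hσ t ⟨ht, htT⟩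
  have hx₀R : x₀ ∈ Metric.closedBall (0 : E) (‖x₀‖ + 1) := by simp
  have hmem {z : E} (hz : z ∈ Metric.closedBall 0 (‖x₀‖ + 1)) :
      ‖Signal.sol Φ σ t z‖ ∈ Icc 0 B :=
    ⟨norm_nonneg _, mem_closedBall_zero_iff.1 (hB σ hσ z hz t ht)⟩
  refine ha_unif _ (hmem hx₀R) _ (hmem hxR) (lt_of_le_of_lt ?_ hx)
  calc dist ‖Signal.sol Φ σ t x₀‖ ‖Signal.sol Φ σ t x‖
      ≤ dist (Signal.sol Φ σ t x₀) (Signal.sol Φ σ t x) :=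
        (dist_norm_norm_le _ _).trans_eq (dist_eq_norm _ _).symm
    _ ≤ dist x₀ x * Real.exp (K * t) :=
      Signal.dist_sol_le hΦ hK (hB σ hσ x₀ hx₀R) (hB σ hσ x hxR) ht
    _ ≤ dist x₀ x * Real.exp (K * T) := by gcongr

lemma ExpDecay.equicontinuous (h : ExpDecay Φ S a γ) (ha : ClassKInf a) (hγ : ClassKInf γ)
    (hΦ : ∀ i, IsForwardFlow (f i) (Φ i))
    (hf : ∀ i R, ∃ K, LipschitzOnWith K (f i) (Metric.closedBall 0 R)) :
    Equicontinuous fun (p : S × Ici (0 : ℝ)) x =>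
      Real.exp p.2 * a ‖Signal.sol Φ p.1 p.2 x‖ := by
  intro x₀
  refine Metric.equicontinuousAt_iff_right.2 fun ε hε => ?_
  obtain ⟨T, hT⟩ : ∃ T, γ (‖x₀‖ + 1) * Real.exp (-T) < ε :=
    (((Real.tendsto_exp_neg_atTop_nhds_zero.const_mul _).eventually_lt_const
      (by rwa [mul_zero]))).exists
  have htail {σ : Signal M} (hσ : σ ∈ S) {t : ℝ} (ht : 0 ≤ t) (hTt : T ≤ t) {z : E}
      (hz : ‖z‖ ≤ ‖x₀‖ + 1) : Real.exp t * a ‖Signal.sol Φ σ t z‖ ∈ Ico 0 ε := by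
    have hR : 0 ≤ ‖x₀‖ + 1 := (norm_nonneg z).trans hz
    refine ⟨mul_nonneg (Real.exp_pos t).le (ha.nonneg (norm_nonneg _)), ?_⟩
    calc _ ≤ γ ‖z‖ * Real.exp (-t) := h.exp_mul_le_mul_exp_neg hσ ht z
      _ ≤ γ (‖x₀‖ + 1) * Real.exp (-T) := by
        gcongr
        · exact hγ.nonneg hR
        · exact hγ.monotoneOn (norm_nonneg z) hR hz
      _ < ε := hT
  have hball : ∀ᶠ x in 𝓝 x₀, ‖x‖ < ‖x₀‖ + 1 :=
    continuous_norm.continuousAt.eventually_lt_const (lt_add_one _)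
  filter_upwards [hball, h.eventually_dist_lt ha hγ hΦ hf x₀ T
    (mul_pos hε (Real.exp_pos (-T)))] with x hxR hx
  rintro ⟨⟨σ, hσ⟩, ⟨t, (ht : 0 ≤ t)⟩⟩
  rcases le_total T t with hTt | htT
  · obtain ⟨hx₀_nonneg, hx₀_lt⟩ := htail hσ ht hTt (lt_add_one ‖x₀‖).le
    obtain ⟨hx_nonneg, hx_lt⟩ := htail hσ ht hTt hxR.le
    exact abs_sub_lt_of_nonneg_of_lt hx₀_nonneg hx₀_lt hx_nonneg hx_lt
  · calc dist (Real.exp t * a ‖Signal.sol Φ σ t x₀‖) (Real.exp t * a ‖Signal.sol Φ σ t x‖)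
        = Real.exp t * dist (a ‖Signal.sol Φ σ t x₀‖) (a ‖Signal.sol Φ σ t x‖) := by
          rw [Real.dist_eq, ← mul_sub, abs_mul, abs_of_pos (Real.exp_pos t), Real.dist_eq]
      _ < Real.exp t * (ε * Real.exp (-T)) :=
        mul_lt_mul_of_pos_left (hx σ hσ t ⟨ht, htT⟩) (Real.exp_pos t)
      _ = ε * Real.exp (t - T) := by rw [mul_left_comm, ← Real.exp_add, sub_eq_add_neg]
      _ ≤ ε := mul_le_of_le_one_right hε.le (Real.exp_le_one_iff.2 (sub_nonpos.2 htT))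

lemma ExpDecay.continuous_valueFunction (h : ExpDecay Φ S a γ) (ha : ClassKInf a)
    (hγ : ClassKInf γ) (hΦ : ∀ i, IsForwardFlow (f i) (Φ i))
    (hf : ∀ i R, ∃ K, LipschitzOnWith K (f i) (Metric.closedBall 0 R)) (hS : S.Nonempty) :
    Continuous (valueFunction Φ S a) :=
  have := hS.to_subtype
  continuous_ciSup_of_equicontinuous (h.equicontinuous ha hγ hΦ hf) (h.bddAbove_range hγ)

end Continuity

end ValueFunction

section MultipleLyapunov

variable {M : ℕ} {E : Type*} [NormedAddCommGroup E] {Φ : Fin M → ℝ → E → E} {a γ : ℝ → ℝ}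
  {τ1 τ2 : ℝ} {W : Fin M → E → ℝ} {i : Fin M}

/-- Lyapunov functions `W i` attached to the instants at which mode `i` is entered: they are
compared along a whole dwell period `d ∈ [τ1, τ2]`, without functions `V_i^+` in between. -/
structure IsEntryLyapunov (Φ : Fin M → ℝ → E → E) (a γ : ℝ → ℝ) (τ1 τ2 : ℝ)
    (W : Fin M → E → ℝ) : Prop where
  continuous : ∀ i, Continuous (W i)
  le : ∀ i x, W i x ≤ γ ‖x‖
  norm_flow_le : ∀ i, ∀ t ≥ 0, ∀ x, a ‖Φ i t x‖ ≤ Real.exp (-t) * W i x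
  switch_le : ∀ i j, i ≠ j → ∀ d ∈ Icc τ1 τ2, ∀ x, W j (Φ i d x) ≤ Real.exp (-d) * W i x

section Existence

variable [NormedSpace ℝ E] {f : Fin M → E → E}

lemma ExpDecay.isEntryLyapunov_of_pos (h : ExpDecay Φ (Sdw M τ1 τ2) a γ) (ha : ClassKInf a)
    (hγ : ClassKInf γ) (hΦ : ∀ i, IsForwardFlow (f i) (Φ i))
    (hf : ∀ i R, ∃ K, LipschitzOnWith K (f i) (Metric.closedBall 0 R)) (hτ1 : 0 ≤ τ1)
    (hτ2 : 0 < τ2) :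
    IsEntryLyapunov Φ a γ τ1 τ2 fun i => valueFunction Φ {σ ∈ Sdw M τ1 τ2 | σ.idx 0 = i} a := by
  let S (i : Fin M) : Set (Signal M) := {σ ∈ Sdw M τ1 τ2 | σ.idx 0 = i}
  have hS (i : Fin M) : ExpDecay Φ (S i) a γ := h.mono (sep_subset _ _)
  have hconst (i : Fin M) : Signal.const i ∈ S i := ⟨Signal.const_mem_Sdw i τ1 τ2, rfl⟩
  have hcont (i : Fin M) : Continuous (valueFunction Φ (S i) a) :=
    (hS i).continuous_valueFunction ha hγ hΦ hf ⟨_, hconst i⟩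
  have hswitch {i j : Fin M} (hij : i ≠ j) {d : ℝ} (hd : 0 < d) (hdτ : d ∈ Icc τ1 τ2) (x : E) :
      valueFunction Φ (S j) a (Φ i d x) ≤ Real.exp (-d) * valueFunction Φ (S i) a x := by
    refine (hS i).valueFunction_le_exp_neg_mul hγ ⟨_, hconst j⟩ hd.le fun σ ⟨hσ, hσj⟩ => ?_
    exact ⟨.cons i d hd σ (hσj ▸ hij), ⟨Signal.cons_mem_Sdw hσ hdτ, rfl⟩,
      fun t ht => Signal.sol_cons ht x⟩
  refine ⟨hcont, fun i => (hS i).valueFunction_le hγ ⟨_, hconst i⟩, fun i t ht x =>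
    (hS i).norm_flow_le_exp_neg_mul_valueFunction hγ (hconst i) ht x, fun i j hij d hd x => ?_⟩
  rcases (hτ1.trans hd.1).eq_or_lt with rfl | hd0
  · -- No admissible signal spends zero time in mode `i`: pass to the limit `d → 0`.
    have hflow : ContinuousWithinAt (fun d => Φ i d x) (Ioi 0) 0 :=
      ((hΦ i).isIntegralCurveOn x).continuousOn.continuousWithinAt self_mem_Ici |>.mono
        Ioi_subset_Ici_self
    refine le_of_tendsto_of_tendsto ((hcont j).continuousAt.comp_continuousWithinAt hflow).tendsto
      (Continuous.continuousWithinAt (f := fun d => Real.exp (-d) * valueFunction Φ (S i) a x)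
        (by fun_prop)).tendsto ?_
    filter_upwards [Ioc_mem_nhdsGT hτ2] with d hd'
    exact hswitch hij hd'.1 ⟨hd.1.trans hd'.1.le, hd'.2⟩ x
  · exact hswitch hij hd0 hd x

/- With zero dwell time `switch_le` forces all the `W i` to coincide, hence the supremum over the
signals of all modes. -/
lemma ExpDecay.isEntryLyapunov_of_eq_zero (h : ExpDecay Φ (Sdw M 0 0) a γ) (ha : ClassKInf a)
    (hγ : ClassKInf γ) (hΦ : ∀ i, IsForwardFlow (f i) (Φ i))
    (hf : ∀ i R, ∃ K, LipschitzOnWith K (f i) (Metric.closedBall 0 R)) :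
    IsEntryLyapunov Φ a γ 0 0 fun _ => valueFunction Φ (Sdw M 0 0) a where
  continuous i := h.continuous_valueFunction ha hγ hΦ hf ⟨_, Signal.const_mem_Sdw i 0 0⟩
  le i := h.valueFunction_le hγ ⟨_, Signal.const_mem_Sdw i 0 0⟩
  norm_flow_le i _ ht x :=
    h.norm_flow_le_exp_neg_mul_valueFunction hγ (Signal.const_mem_Sdw i 0 0) ht x
  switch_le i _ _ d hd x := by
    obtain rfl : d = 0 := le_antisymm hd.2 hd.1
    simp only [(hΦ i).map_zero, neg_zero, Real.exp_zero, one_mul, le_refl]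

lemma ExpDecay.exists_isEntryLyapunov (h : ExpDecay Φ (Sdw M τ1 τ2) a γ) (ha : ClassKInf a)
    (hγ : ClassKInf γ) (hΦ : ∀ i, IsForwardFlow (f i) (Φ i))
    (hf : ∀ i R, ∃ K, LipschitzOnWith K (f i) (Metric.closedBall 0 R)) (hτ1 : 0 ≤ τ1)
    (hτ12 : τ1 ≤ τ2) : ∃ W, IsEntryLyapunov Φ a γ τ1 τ2 W := by
  rcases (hτ1.trans hτ12).eq_or_lt with rfl | hτ2
  · obtain rfl : τ1 = 0 := le_antisymm hτ12 hτ1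
    exact ⟨_, h.isEntryLyapunov_of_eq_zero ha hγ hΦ hf⟩
  · exact ⟨_, h.isEntryLyapunov_of_pos ha hγ hΦ hf hτ1 hτ2⟩

end Existence

/-- The smallest choice of `V_i^+` for which `a(|x|) ≤ V_i^+(x)` and, when `V_j^- = W j`,
condition (iii) hold. -/
def exitFunction (Φ : Fin M → ℝ → E → E) (a : ℝ → ℝ) (τ : ℝ) (W : Fin M → E → ℝ) (i : Fin M)
    (x : E) : ℝ :=
  Finset.univ.sup' (Finset.univ_nonempty_iff.2 ⟨i⟩) fun j =>
    if j = i then a ‖x‖ else Real.exp τ * W j (Φ i τ x)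

lemma exitFunction_le_iff {x : E} {c : ℝ} : exitFunction Φ a τ1 W i x ≤ c ↔
    a ‖x‖ ≤ c ∧ ∀ j ≠ i, Real.exp τ1 * W j (Φ i τ1 x) ≤ c := by
  rw [exitFunction, Finset.sup'_le_iff]
  refine ⟨fun h => ⟨?_, fun j hj => ?_⟩, fun ⟨hi, hj⟩ j _ => ?_⟩
  · simpa using h i (Finset.mem_univ i)
  · simpa [hj] using h j (Finset.mem_univ j)
  split_ifs with hji
  exacts [hi, hj j hji]

lemma le_exitFunction (x : E) : a ‖x‖ ≤ exitFunction Φ a τ1 W i x :=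
  (exitFunction_le_iff.1 le_rfl).1

lemma le_exp_neg_mul_exitFunction {j : Fin M} (hij : i ≠ j) (x : E) :
    W j (Φ i τ1 x) ≤ Real.exp (-τ1) * exitFunction Φ a τ1 W i x := by
  rw [Real.exp_neg]
  exact (le_inv_mul_iff₀ (Real.exp_pos τ1)).2 ((exitFunction_le_iff.1 le_rfl).2 j hij.symm)

lemma continuous_exitFunction (ha : ClassKInf a) (hW : ∀ j, Continuous (W j))
    (hΦ : Continuous (Φ i τ1)) : Continuous (exitFunction Φ a τ1 W i) := by
  refine Continuous.finset_sup'_apply _ fun j _ => ?_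
  split_ifs
  · exact ha.1.comp_continuous continuous_norm norm_nonneg
  · exact continuous_const.mul ((hW j).comp hΦ)

lemma IsEntryLyapunov.exitFunction_flow_le (hW : IsEntryLyapunov Φ a γ τ1 τ2 W) {t : ℝ}
    (ht : t ∈ Icc 0 (τ2 - τ1)) {x : E} (hadd : Φ i τ1 (Φ i t x) = Φ i (τ1 + t) x) :
    exitFunction Φ a τ1 W i (Φ i t x) ≤ Real.exp (-t) * W i x := by
  refine exitFunction_le_iff.2 ⟨hW.norm_flow_le i t ht.1 x, fun j hj => ?_⟩
  have hdwell : τ1 + t ∈ Icc τ1 τ2 := ⟨by linarith [ht.1], by linarith [ht.2]⟩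
  calc Real.exp τ1 * W j (Φ i τ1 (Φ i t x))
      ≤ Real.exp τ1 * (Real.exp (-(τ1 + t)) * W i x) := by
        rw [hadd]
        exact mul_le_mul_of_nonneg_left (hW.switch_le i j hj.symm _ hdwell x) (Real.exp_pos _).le
    _ = Real.exp (-t) * W i x := by
        rw [← mul_assoc, ← Real.exp_add]
        ring_nf

theorem multiple_lyapunov_of_guas_general [NormedSpace ℝ E] {f : Fin M → E → E}
    (hf : ∀ i R, ∃ K, LipschitzOnWith K (f i) (Metric.closedBall 0 R))
    (hΦ : ∀ i, IsForwardFlow (f i) (Φ i)) (hτ1 : 0 ≤ τ1) (hτ12 : τ1 ≤ τ2)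
    (hGUAS : GUAS Φ (Sdw M τ1 τ2)) :
    ∃ (α1 α2 : ℝ → ℝ) (Vm Vp : Fin M → E → ℝ),
      ClassKInf α1 ∧ ClassKInf α2 ∧
      (∀ i, Continuous (Vm i)) ∧ (∀ i, Continuous (Vp i)) ∧
      (∀ i, ∀ x, (α1 ‖x‖ ≤ Vm i x ∧ Vm i x ≤ α2 ‖x‖) ∧
        (α1 ‖x‖ ≤ Vp i x ∧ Vp i x ≤ α2 ‖x‖)) ∧
      (∀ i, ∀ t ∈ Icc (0 : ℝ) (τ2 - τ1), ∀ x,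
        Vp i (Φ i t x) ≤ Real.exp (-t) * Vm i x) ∧
      (∀ i j, i ≠ j → ∀ x, Vm j (Φ i τ1 x) ≤ Real.exp (-τ1) * Vp i x) := by
  obtain ⟨a, γ, ha, hγ, hdecay⟩ := hGUAS.exists_expDecay
  obtain ⟨W, hW⟩ := hdecay.exists_isEntryLyapunov ha hγ hΦ hf hτ1 hτ12
  have hbdd (i : Fin M) (R : ℝ) : ∃ B, ∀ x ∈ Metric.closedBall 0 R, ∀ t ≥ 0,
      Φ i t x ∈ Metric.closedBall 0 B := by
    obtain ⟨B, hB⟩ := hdecay.exists_sol_mem_closedBall ha hγ R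
    exact ⟨B, fun x hx t ht => Signal.sol_const (Φ := Φ) i ht x ▸
      hB _ (Signal.const_mem_Sdw i τ1 τ2) x hx t ht⟩
  have hexit (i : Fin M) (t : ℝ) (ht : t ∈ Icc 0 (τ2 - τ1)) (x : E) :=
    hW.exitFunction_flow_le ht ((hΦ i).map_add_of_bounded (hf i) (hbdd i) hτ1 ht.1 x)
  have hle (i : Fin M) (x : E) : a ‖x‖ ≤ W i x := by
    simpa [(hΦ i).map_zero] using hW.norm_flow_le i 0 le_rfl x
  have hexit_le (i : Fin M) (x : E) : exitFunction Φ a τ1 W i x ≤ W i x := by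
    simpa [(hΦ i).map_zero] using hexit i 0 ⟨le_rfl, sub_nonneg.2 hτ12⟩ x
  exact ⟨a, γ, W, exitFunction Φ a τ1 W, ha, hγ, hW.continuous,
    fun i => continuous_exitFunction ha hW.continuous
      ((hΦ i).continuous_of_bounded (hf i) (hbdd i) hτ1),
    fun i x => ⟨⟨hle i x, hW.le i x⟩, le_exitFunction x, (hexit_le i x).trans (hW.le i x)⟩,
    hexit, fun i j hij x => le_exp_neg_mul_exitFunction hij x⟩

end MultipleLyapunov

/-- Theorem 1, necessity: if the switched system is GUAS on `S_dw(τ1,τ2)`,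
then there exist multiple Lyapunov functions `V_i^−, V_i^+` as in Theorem 1. -/
theorem multiple_lyapunov_of_guas {n M : ℕ}
    (f : Fin M → EuclideanSpace ℝ (Fin n) → EuclideanSpace ℝ (Fin n))
    (Φ : Fin M → ℝ → EuclideanSpace ℝ (Fin n) → EuclideanSpace ℝ (Fin n))
    (hlip : ∀ i, LocallyLipschitz (f i))
    (hf0 : ∀ i, f i 0 = 0)
    (hΦ0 : ∀ i x, Φ i 0 x = x)
    (hode : ∀ i x t, HasDerivAt (fun τ => Φ i τ x) (f i (Φ i t x)) t)
    (huniq : ∀ i (γ : ℝ → EuclideanSpace ℝ (Fin n)),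
        (∀ t, HasDerivAt γ (f i (γ t)) t) → ∀ t, γ t = Φ i t (γ 0))
    (τ1 τ2 : ℝ) (hτ1 : 0 ≤ τ1) (hτ12 : τ1 ≤ τ2)
    (hGUAS : GUAS Φ (Sdw M τ1 τ2)) :
    ∃ (α1 α2 : ℝ → ℝ) (Vm Vp : Fin M → EuclideanSpace ℝ (Fin n) → ℝ),
      ClassKInf α1 ∧ ClassKInf α2 ∧
      (∀ i, Continuous (Vm i)) ∧ (∀ i, Continuous (Vp i)) ∧
      (∀ i, ∀ x, (α1 ‖x‖ ≤ Vm i x ∧ Vm i x ≤ α2 ‖x‖) ∧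
        (α1 ‖x‖ ≤ Vp i x ∧ Vp i x ≤ α2 ‖x‖)) ∧
      (∀ i, ∀ t ∈ Icc (0 : ℝ) (τ2 - τ1), ∀ x,
        Vp i (Φ i t x) ≤ Real.exp (-t) * Vm i x) ∧
      (∀ i j, i ≠ j → ∀ x, Vm j (Φ i τ1 x) ≤ Real.exp (-τ1) * Vp i x) :=
  multiple_lyapunov_of_guas_general
    (fun i R => (hlip i).locallyLipschitzOn.exists_lipschitzOnWith_of_compact
      (isCompact_closedBall 0 R))
    (fun i => ⟨hΦ0 i, fun x t _ => (hode i x t).hasDerivWithinAt⟩) hτ1 hτ12 hGUAS
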